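/- arXiv:math/0309365 — 2 statements merged into one kernel-verified Lean document; each statement's English description precedes it below -/
import Mathlib

section
/- In M_n(ℂ) with the Schatten p-norm, 0 < p < ∞, p ≠ 2, two matrices ξ, η satisfy ‖ξ+η‖_p^p + ‖ξ-η‖_p^p = 2(‖ξ‖_p^p + ‖η‖_p^p) if and only if ξη* = ξ*η = 0. -/
open Matrix

/-- `‖a‖_p^p = Tr((a*a)^{p/2})`, the `p`-th power of the Schatten `p`-norm,
with the fractional power given by functional calculus. -/
noncomputable def schattenPowP {n : ℕ} (a : Matrix (Fin n) (Fin n) ℂ) (p : ℝ) : ℂ :=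
  (cfc (fun t : ℝ => t ^ (p / 2)) (aᴴ * a)).trace

/-!
Let `p > 2`, so that `f t = t ^ (p / 2)` is strictly convex on `[0, ∞)` with `f 0 = 0`; for `p < 2`
use `-f`. By the parallelogram law `ξᴴξ + ηᴴη` is the midpoint of `(ξ + η)ᴴ(ξ + η)` and
`(ξ - η)ᴴ(ξ - η)`, so convexity of `A ↦ Tr f(A)` gives
`Tr f((ξ + η)ᴴ(ξ + η)) + Tr f((ξ - η)ᴴ(ξ - η)) ≥ 2 Tr f(ξᴴξ + ηᴴη)`.
Stacking `ξ` on top of `η` to a matrix `T`, the matrix `ξᴴξ + ηᴴη = TᴴT` has the same nonzero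
eigenvalues as `TTᴴ`, whose diagonal blocks are `ξξᴴ` and `ηηᴴ`. Passing to the diagonal blocks
decreases `Tr f` strictly unless the corner `ξηᴴ` vanishes, by the equality case of Jensen's
inequality. Hence equality in Clarkson's inequality forces `ξηᴴ = 0`, and, applied to the adjoints,
`ξᴴη = 0`.
-/

variable {𝕜 m n : Type*} [RCLike 𝕜] [Fintype m] [Fintype n] [DecidableEq n]
  {f : ℝ → ℝ} {s : Set ℝ}

/-- The sum of `f` over the real parts of the eigenvalues of `A` in `𝕜`, counted with algebraic
multiplicity. For Hermitian `A` this is the trace of `f(A)`; the definition through the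
characteristic polynomial makes its invariance properties purely algebraic. -/
noncomputable def spectralSum (f : ℝ → ℝ) (A : Matrix n n 𝕜) : ℝ :=
  (A.charpoly.roots.map fun z => f (RCLike.re z)).sum

lemma spectralSum_neg (f : ℝ → ℝ) (A : Matrix n n 𝕜) :
    spectralSum (fun t => -f t) A = -spectralSum f A := by
  simp only [spectralSum, Multiset.sum_map_neg]

lemma spectralSum_diagonal (f : ℝ → ℝ) (d : n → 𝕜) :
    spectralSum f (diagonal d) = ∑ i, f (RCLike.re (d i)) := by
  rw [spectralSum, charpoly_diagonal,
    Polynomial.roots_prod _ _ (Finset.prod_ne_zero_iff.mpr fun i _ => Polynomial.X_sub_C_ne_zero _)]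
  simp

lemma spectralSum_mul_comm [DecidableEq m] (h0 : f 0 = 0) (A : Matrix m n 𝕜) (B : Matrix n m 𝕜) :
    spectralSum f (A * B) = spectralSum f (B * A) := by
  have hroots := congrArg Polynomial.roots (charpoly_mul_comm' A B)
  rw [Polynomial.roots_mul (by simp [(charpoly_monic _).ne_zero]),
    Polynomial.roots_mul (by simp [(charpoly_monic _).ne_zero])] at hroots
  simpa [spectralSum, h0, Multiset.map_nsmul, Multiset.sum_nsmul] using
    congrArg (fun r => (r.map fun z => f (RCLike.re z)).sum) hroots

section FunctionalCalculus

variable {A : Matrix n n 𝕜}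

lemma spectralSum_eq_sum_eigenvalues (f : ℝ → ℝ) (hA : A.IsHermitian) :
    spectralSum f A = ∑ i, f (hA.eigenvalues i) := by
  simp [spectralSum, hA.roots_charpoly_eq_eigenvalues]

lemma trace_cfc_eq_spectralSum (f : ℝ → ℝ) (hA : A.IsHermitian) :
    (cfc f A).trace = (spectralSum f A : 𝕜) := by
  rw [spectralSum_eq_sum_eigenvalues f hA, hA.cfc_eq, IsHermitian.cfc,
    Unitary.conjStarAlgAut_apply, trace_mul_comm, ← mul_assoc]
  simp [trace]

lemma spectralSum_eq_sum_re_cfc_diag (f : ℝ → ℝ) (hA : A.IsHermitian) :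
    spectralSum f A = ∑ i, RCLike.re (cfc f A i i) := by
  rw [← RCLike.ofReal_re (K := 𝕜) (spectralSum f A), ← trace_cfc_eq_spectralSum f hA, trace,
    map_sum]
  rfl

lemma cfc_apply_eq_sum (f : ℝ → ℝ) (hA : A.IsHermitian) (i j : n) :
    cfc f A i j = ∑ l, hA.eigenvectorUnitary.1 i l * (f (hA.eigenvalues l) : 𝕜) *
      star (hA.eigenvectorUnitary.1 j l) := by
  rw [hA.cfc_eq, IsHermitian.cfc, Unitary.conjStarAlgAut_apply, mul_apply]
  simp only [mul_diagonal, star_apply, Function.comp_apply]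

lemma re_cfc_diag_eq_sum (f : ℝ → ℝ) (hA : A.IsHermitian) (i : n) :
    RCLike.re (cfc f A i i) =
      ∑ l, ‖hA.eigenvectorUnitary.1 i l‖ ^ 2 • f (hA.eigenvalues l) := by
  rw [cfc_apply_eq_sum f hA, map_sum]
  refine Finset.sum_congr rfl fun l _ => ?_
  rw [mul_right_comm, RCLike.star_def, RCLike.mul_conj, smul_eq_mul]
  exact_mod_cast RCLike.ofReal_re (K := 𝕜) _

lemma re_diag_eq_sum (hA : A.IsHermitian) (i : n) :
    RCLike.re (A i i) =
      ∑ l, ‖hA.eigenvectorUnitary.1 i l‖ ^ 2 • hA.eigenvalues l := by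
  conv_lhs => rw [← cfc_id' ℝ A hA]
  exact re_cfc_diag_eq_sum _ hA i

lemma conj_eigenvectorUnitary (hA : A.IsHermitian) :
    hA.eigenvectorUnitary.1ᴴ * A * hA.eigenvectorUnitary.1 =
      diagonal (RCLike.ofReal ∘ hA.eigenvalues) :=
  (Unitary.conjStarAlgAut_star_apply (S := 𝕜) hA.eigenvectorUnitary A).symm.trans
    hA.conjStarAlgAut_star_eigenvectorUnitary

end FunctionalCalculus

section Diagonal

variable {A U : Matrix n n 𝕜}

lemma sum_norm_sq_row_of_mem_unitaryGroup (hU : U ∈ unitaryGroup n 𝕜) (i : n) :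
    ∑ l, ‖U i l‖ ^ 2 = 1 := by
  have h := congrFun₂ (mem_unitaryGroup_iff.mp hU) i i
  simp only [mul_apply, star_apply, RCLike.star_def, RCLike.mul_conj, one_apply_eq] at h
  exact_mod_cast h

lemma re_diag_mem (hs : Convex ℝ s) (hA : A.IsHermitian) (hAs : spectrum ℝ A ⊆ s) (i : n) :
    RCLike.re (A i i) ∈ s := by
  rw [re_diag_eq_sum hA]
  exact hs.sum_mem (fun _ _ => by positivity)
    (sum_norm_sq_row_of_mem_unitaryGroup hA.eigenvectorUnitary.2 i)
    fun l _ => hAs (hA.eigenvalues_mem_spectrum_real l)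

lemma map_re_diag_le_re_cfc_diag (hf : ConvexOn ℝ s f) (hA : A.IsHermitian)
    (hAs : spectrum ℝ A ⊆ s) (i : n) :
    f (RCLike.re (A i i)) ≤ RCLike.re (cfc f A i i) := by
  rw [re_diag_eq_sum hA, re_cfc_diag_eq_sum f hA]
  exact hf.map_sum_le (fun _ _ => by positivity)
    (sum_norm_sq_row_of_mem_unitaryGroup hA.eigenvectorUnitary.2 i)
    fun l _ => hAs (hA.eigenvalues_mem_spectrum_real l)

lemma apply_eq_zero_of_map_re_diag_eq (hf : StrictConvexOn ℝ s f) (hA : A.IsHermitian)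
    (hAs : spectrum ℝ A ⊆ s) {i j : n} (hij : i ≠ j)
    (heq : f (RCLike.re (A i i)) = RCLike.re (cfc f A i i)) : A i j = 0 := by
  set U : Matrix n n 𝕜 := hA.eigenvectorUnitary.1
  have eigenvalue_eq : ∀ l, U i l ≠ 0 → hA.eigenvalues l = RCLike.re (A i i) := by
    rw [re_diag_eq_sum hA, re_cfc_diag_eq_sum f hA,
      hf.map_sum_eq_iff' (fun _ _ => by positivity)
        (sum_norm_sq_row_of_mem_unitaryGroup hA.eigenvectorUnitary.2 i)
        fun l _ => hAs (hA.eigenvalues_mem_spectrum_real l)] at heq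
    intro l hl
    rw [re_diag_eq_sum hA]
    exact heq l (Finset.mem_univ l) (pow_ne_zero 2 (norm_ne_zero_iff.mpr hl))
  have rows_orthogonal : ∑ l, U i l * star (U j l) = 0 := by
    have h := congrFun₂ (mem_unitaryGroup_iff.mp hA.eigenvectorUnitary.2) i j
    rwa [one_apply_ne hij] at h
  calc A i j = ∑ l, U i l * (hA.eigenvalues l : 𝕜) * star (U j l) := by
        conv_lhs => rw [← cfc_id' ℝ A hA]
        exact cfc_apply_eq_sum _ hA i j
    _ = ∑ l, (RCLike.re (A i i) : 𝕜) * (U i l * star (U j l)) := by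
        refine Finset.sum_congr rfl fun l _ => ?_
        by_cases hl : U i l = 0
        · simp [hl]
        · rw [eigenvalue_eq l hl]
          ring
    _ = 0 := by rw [← Finset.mul_sum, rows_orthogonal, mul_zero]

lemma sum_map_re_diag_le_spectralSum (hf : ConvexOn ℝ s f) (hA : A.IsHermitian)
    (hAs : spectrum ℝ A ⊆ s) : ∑ i, f (RCLike.re (A i i)) ≤ spectralSum f A := by
  rw [spectralSum_eq_sum_re_cfc_diag f hA]
  exact Finset.sum_le_sum fun i _ => map_re_diag_le_re_cfc_diag hf hA hAs i

lemma sum_map_re_diag_eq_spectralSum_iff (hf : StrictConvexOn ℝ s f) (hA : A.IsHermitian)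
    (hAs : spectrum ℝ A ⊆ s) : ∑ i, f (RCLike.re (A i i)) = spectralSum f A ↔ A.IsDiag := by
  refine ⟨fun h i j hij => ?_, fun h => ?_⟩
  · rw [spectralSum_eq_sum_re_cfc_diag f hA, Finset.sum_eq_sum_iff_of_le fun i _ =>
      map_re_diag_le_re_cfc_diag hf.convexOn hA hAs i] at h
    exact apply_eq_zero_of_map_re_diag_eq hf hA hAs hij (h i (Finset.mem_univ i))
  · conv_rhs => rw [← h.diagonal_diag, spectralSum_diagonal]
    rfl

end Diagonal

section UnitaryConjugation

variable {A U : Matrix n n 𝕜}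

lemma spectralSum_unitary_conj (f : ℝ → ℝ) (hU : U ∈ unitaryGroup n 𝕜) (A : Matrix n n 𝕜) :
    spectralSum f (Uᴴ * A * U) = spectralSum f A := by
  have hUU : U * Uᴴ = 1 := mem_unitaryGroup_iff.mp hU
  rw [spectralSum, charpoly_mul_comm, ← Matrix.mul_assoc, hUU, Matrix.one_mul, spectralSum]

lemma spectrum_unitary_conj (hU : U ∈ unitaryGroup n 𝕜) (A : Matrix n n 𝕜) :
    spectrum ℝ (Uᴴ * A * U) = spectrum ℝ A :=
  Unitary.spectrum_star_left_conjugate (U := ⟨U, hU⟩)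

lemma re_diag_unitary_conj_mem (hs : Convex ℝ s) (hA : A.IsHermitian) (hAs : spectrum ℝ A ⊆ s)
    (hU : U ∈ unitaryGroup n 𝕜) (i : n) : RCLike.re ((Uᴴ * A * U) i i) ∈ s :=
  re_diag_mem hs (isHermitian_conjTranspose_mul_mul U hA)
    ((spectrum_unitary_conj hU A).trans_subset hAs) i

lemma sum_map_re_diag_unitary_conj_le_spectralSum (hf : ConvexOn ℝ s f) (hA : A.IsHermitian)
    (hAs : spectrum ℝ A ⊆ s) (hU : U ∈ unitaryGroup n 𝕜) :
    ∑ i, f (RCLike.re ((Uᴴ * A * U) i i)) ≤ spectralSum f A :=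
  (sum_map_re_diag_le_spectralSum hf (isHermitian_conjTranspose_mul_mul U hA)
    ((spectrum_unitary_conj hU A).trans_subset hAs)).trans_eq (spectralSum_unitary_conj f hU A)

lemma sum_map_re_diag_unitary_conj_eq_spectralSum_iff (hf : StrictConvexOn ℝ s f)
    (hA : A.IsHermitian) (hAs : spectrum ℝ A ⊆ s) (hU : U ∈ unitaryGroup n 𝕜) :
    ∑ i, f (RCLike.re ((Uᴴ * A * U) i i)) = spectralSum f A ↔ (Uᴴ * A * U).IsDiag := by
  rw [← spectralSum_unitary_conj f hU A]
  exact sum_map_re_diag_eq_spectralSum_iff hf (isHermitian_conjTranspose_mul_mul U hA)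
    ((spectrum_unitary_conj hU A).trans_subset hAs)

end UnitaryConjugation

section TraceConvexity

lemma isHermitian_smul_add_smul {ι : Type*} {A B : Matrix ι ι 𝕜} (hA : A.IsHermitian)
    (hB : B.IsHermitian) (a b : ℝ) :
    (a • A + b • B).IsHermitian :=
  (hA.smul (IsSelfAdjoint.all a)).add (hB.smul (IsSelfAdjoint.all b))

variable {A B : Matrix n n 𝕜}

lemma eigenvalues_smul_add_smul {a b : ℝ} (hC : (a • A + b • B).IsHermitian) (i : n) :
    hC.eigenvalues i =
      a • RCLike.re ((hC.eigenvectorUnitary.1ᴴ * A * hC.eigenvectorUnitary.1) i i) +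
      b • RCLike.re
        ((hC.eigenvectorUnitary.1ᴴ * B * hC.eigenvectorUnitary.1) i i) := by
  have h := congrFun₂ (conj_eigenvectorUnitary hC) i i
  rw [diagonal_apply_eq, Function.comp_apply] at h
  rw [← RCLike.ofReal_re (K := 𝕜) (hC.eigenvalues i), ← h]
  simp only [Matrix.mul_add, Matrix.add_mul, Matrix.mul_smul, Matrix.smul_mul,
    Matrix.add_apply, Matrix.smul_apply, map_add, RCLike.smul_re, smul_eq_mul]

lemma spectrum_smul_add_smul_subset (hs : Convex ℝ s) (hA : A.IsHermitian)
    (hAs : spectrum ℝ A ⊆ s) (hB : B.IsHermitian) (hBs : spectrum ℝ B ⊆ s) {a b : ℝ}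
    (ha : 0 ≤ a) (hb : 0 ≤ b) (hab : a + b = 1) : spectrum ℝ (a • A + b • B) ⊆ s := by
  have hC := isHermitian_smul_add_smul hA hB a b
  rw [hC.spectrum_real_eq_range_eigenvalues]
  rintro _ ⟨i, rfl⟩
  rw [eigenvalues_smul_add_smul]
  exact hs (re_diag_unitary_conj_mem hs hA hAs hC.eigenvectorUnitary.2 i)
    (re_diag_unitary_conj_mem hs hB hBs hC.eigenvectorUnitary.2 i) ha hb hab

theorem convexOn_spectralSum (hf : ConvexOn ℝ s f) :
    ConvexOn ℝ {A : Matrix n n 𝕜 | A.IsHermitian ∧ spectrum ℝ A ⊆ s} (spectralSum f) := by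
  refine ⟨fun A ⟨hA, hAs⟩ B ⟨hB, hBs⟩ a b ha hb hab => ⟨isHermitian_smul_add_smul hA hB a b,
    spectrum_smul_add_smul_subset hf.1 hA hAs hB hBs ha hb hab⟩,
    fun A ⟨hA, hAs⟩ B ⟨hB, hBs⟩ a b ha hb hab => ?_⟩
  have hC := isHermitian_smul_add_smul hA hB a b
  have hU := hC.eigenvectorUnitary.2
  set U : Matrix n n 𝕜 := hC.eigenvectorUnitary.1
  calc spectralSum f (a • A + b • B)
      = ∑ i, f (a • RCLike.re ((Uᴴ * A * U) i i) + b • RCLike.re ((Uᴴ * B * U) i i)) := by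
        simp only [spectralSum_eq_sum_eigenvalues f hC, eigenvalues_smul_add_smul, U]
    _ ≤ ∑ i, (a • f (RCLike.re ((Uᴴ * A * U) i i)) + b • f (RCLike.re ((Uᴴ * B * U) i i))) :=
        Finset.sum_le_sum fun i _ => hf.2 (re_diag_unitary_conj_mem hf.1 hA hAs hU i)
          (re_diag_unitary_conj_mem hf.1 hB hBs hU i) ha hb hab
    _ = a • ∑ i, f (RCLike.re ((Uᴴ * A * U) i i)) +
          b • ∑ i, f (RCLike.re ((Uᴴ * B * U) i i)) := by
        rw [Finset.sum_add_distrib, Finset.smul_sum, Finset.smul_sum]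
    _ ≤ a • spectralSum f A + b • spectralSum f B :=
        add_le_add
          (smul_le_smul_of_nonneg_left
            (sum_map_re_diag_unitary_conj_le_spectralSum hf hA hAs hU) ha)
          (smul_le_smul_of_nonneg_left
            (sum_map_re_diag_unitary_conj_le_spectralSum hf hB hBs hU) hb)

end TraceConvexity

section Pinching

variable [DecidableEq m] {A U : Matrix m m 𝕜} {B V : Matrix n n 𝕜} {X : Matrix m n 𝕜}
  {Y : Matrix n m 𝕜}

lemma fromBlocks_mem_unitaryGroup (hU : U ∈ unitaryGroup m 𝕜) (hV : V ∈ unitaryGroup n 𝕜) :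
    fromBlocks U 0 0 V ∈ unitaryGroup (m ⊕ n) 𝕜 := by
  rw [mem_unitaryGroup_iff, star_eq_conjTranspose] at *
  simp [fromBlocks_conjTranspose, fromBlocks_multiply, hU, hV]

lemma unitary_conjTranspose_mul_mul_eq_zero_iff (hU : U ∈ unitaryGroup m 𝕜)
    (hV : V ∈ unitaryGroup n 𝕜) : Uᴴ * X * V = 0 ↔ X = 0 := by
  refine ⟨fun h => ?_, fun h => by simp [h]⟩
  rw [mem_unitaryGroup_iff, star_eq_conjTranspose] at hU hV
  calc X = U * Uᴴ * X * (V * Vᴴ) := by rw [hU, hV, Matrix.one_mul, Matrix.mul_one]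
    _ = U * (Uᴴ * X * V) * Vᴴ := by simp only [Matrix.mul_assoc]
    _ = 0 := by rw [h, Matrix.mul_zero, Matrix.zero_mul]

lemma fromBlocks_eigenvectorUnitary_conj (hA : A.IsHermitian) (hB : B.IsHermitian)
    (X : Matrix m n 𝕜) (Y : Matrix n m 𝕜) :
    (fromBlocks hA.eigenvectorUnitary.1 0 0 hB.eigenvectorUnitary.1)ᴴ *
        fromBlocks A X Y B * fromBlocks hA.eigenvectorUnitary.1 0 0 hB.eigenvectorUnitary.1 =
      fromBlocks (diagonal (RCLike.ofReal ∘ hA.eigenvalues))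
        (hA.eigenvectorUnitary.1ᴴ * X * hB.eigenvectorUnitary.1)
        (hB.eigenvectorUnitary.1ᴴ * Y * hA.eigenvectorUnitary.1)
        (diagonal (RCLike.ofReal ∘ hB.eigenvalues)) := by
  simp [fromBlocks_conjTranspose, fromBlocks_multiply, conj_eigenvectorUnitary]

theorem spectralSum_add_le_spectralSum_fromBlocks (hf : ConvexOn ℝ s f)
    (hM : (fromBlocks A X Y B).IsHermitian) (hMs : spectrum ℝ (fromBlocks A X Y B) ⊆ s) :
    spectralSum f A + spectralSum f B ≤ spectralSum f (fromBlocks A X Y B) := by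
  obtain ⟨hA, -, -, hB⟩ := isHermitian_fromBlocks_iff.mp hM
  have h := sum_map_re_diag_unitary_conj_le_spectralSum hf hM hMs
    (fromBlocks_mem_unitaryGroup hA.eigenvectorUnitary.2 hB.eigenvectorUnitary.2)
  rw [fromBlocks_eigenvectorUnitary_conj] at h
  simpa [spectralSum_eq_sum_eigenvalues f hA, spectralSum_eq_sum_eigenvalues f hB] using h

theorem spectralSum_add_eq_spectralSum_fromBlocks_iff (hf : StrictConvexOn ℝ s f)
    (hM : (fromBlocks A X Y B).IsHermitian) (hMs : spectrum ℝ (fromBlocks A X Y B) ⊆ s) :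
    spectralSum f A + spectralSum f B = spectralSum f (fromBlocks A X Y B) ↔ X = 0 := by
  obtain ⟨hA, hXY, -, hB⟩ := isHermitian_fromBlocks_iff.mp hM
  have hU := hA.eigenvectorUnitary.2
  have hV := hB.eigenvectorUnitary.2
  have h := sum_map_re_diag_unitary_conj_eq_spectralSum_iff hf hM hMs
    (fromBlocks_mem_unitaryGroup hU hV)
  rw [fromBlocks_eigenvectorUnitary_conj, isDiag_fromBlocks_iff,
    unitary_conjTranspose_mul_mul_eq_zero_iff hU hV,
    unitary_conjTranspose_mul_mul_eq_zero_iff hV hU] at h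
  have hY : Y = 0 ↔ X = 0 := by rw [← hXY, conjTranspose_eq_zero]
  simpa [spectralSum_eq_sum_eigenvalues f hA, spectralSum_eq_sum_eigenvalues f hB, hY,
    isDiag_diagonal] using h

end Pinching

section GramMatrix

lemma spectrum_conjTranspose_mul_self_subset (ξ : Matrix m n 𝕜) :
    spectrum ℝ (ξᴴ * ξ) ⊆ Set.Ici 0 := by
  rw [(isHermitian_conjTranspose_mul_self ξ).spectrum_real_eq_range_eigenvalues]
  rintro _ ⟨i, rfl⟩
  exact eigenvalues_conjTranspose_mul_self_nonneg ξ i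

lemma two_mul_spectralSum_le_of_parallelogram (hf : ConvexOn ℝ (Set.Ici 0) f)
    (ξ η : Matrix m n 𝕜) :
    2 * spectralSum f (ξᴴ * ξ + ηᴴ * η) ≤
      spectralSum f ((ξ + η)ᴴ * (ξ + η)) + spectralSum f ((ξ - η)ᴴ * (ξ - η)) := by
  have midpoint : (2⁻¹ : ℝ) • ((ξ + η)ᴴ * (ξ + η)) + (2⁻¹ : ℝ) • ((ξ - η)ᴴ * (ξ - η)) =
      ξᴴ * ξ + ηᴴ * η := by
    simp only [conjTranspose_add, conjTranspose_sub, Matrix.add_mul, Matrix.sub_mul,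
      Matrix.mul_add, Matrix.mul_sub]
    module
  have h := (convexOn_spectralSum (𝕜 := 𝕜) (n := n) hf).2
    ⟨isHermitian_conjTranspose_mul_self (ξ + η), spectrum_conjTranspose_mul_self_subset (ξ + η)⟩
    ⟨isHermitian_conjTranspose_mul_self (ξ - η), spectrum_conjTranspose_mul_self_subset (ξ - η)⟩
    (by norm_num : (0 : ℝ) ≤ 2⁻¹) (by norm_num : (0 : ℝ) ≤ 2⁻¹) (by norm_num)
  rw [midpoint, smul_eq_mul, smul_eq_mul] at h
  linarith

variable {k : Type*}

omit [Fintype m] [DecidableEq n] in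
lemma isHermitian_fromBlocks_gram (ξ : Matrix m n 𝕜) (η : Matrix k n 𝕜) :
    (fromBlocks (ξ * ξᴴ) (ξ * ηᴴ) (η * ξᴴ) (η * ηᴴ)).IsHermitian := by
  rw [← fromRows_mul_fromCols, ← conjTranspose_fromRows_eq_fromCols_conjTranspose]
  exact isHermitian_mul_conjTranspose_self _

variable [Fintype k]

omit [DecidableEq n] in
lemma spectrum_fromBlocks_gram_subset [DecidableEq m] [DecidableEq k] (ξ : Matrix m n 𝕜)
    (η : Matrix k n 𝕜) :
    spectrum ℝ (fromBlocks (ξ * ξᴴ) (ξ * ηᴴ) (η * ξᴴ) (η * ηᴴ)) ⊆ Set.Ici 0 := by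
  have h := spectrum_conjTranspose_mul_self_subset (fromRows ξ η)ᴴ
  rwa [conjTranspose_conjTranspose, conjTranspose_fromRows_eq_fromCols_conjTranspose,
    fromRows_mul_fromCols] at h

lemma spectralSum_fromBlocks_gram [DecidableEq m] [DecidableEq k] (h0 : f 0 = 0)
    (ξ : Matrix m n 𝕜) (η : Matrix k n 𝕜) :
    spectralSum f (fromBlocks (ξ * ξᴴ) (ξ * ηᴴ) (η * ξᴴ) (η * ηᴴ)) =
      spectralSum f (ξᴴ * ξ + ηᴴ * η) := by
  rw [← fromRows_mul_fromCols, spectralSum_mul_comm h0, fromCols_mul_fromRows]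

theorem spectralSum_add_le_spectralSum_gram_add (hf : ConvexOn ℝ (Set.Ici 0) f) (h0 : f 0 = 0)
    (ξ : Matrix m n 𝕜) (η : Matrix k n 𝕜) :
    spectralSum f (ξᴴ * ξ) + spectralSum f (ηᴴ * η) ≤ spectralSum f (ξᴴ * ξ + ηᴴ * η) := by
  classical
  rw [spectralSum_mul_comm h0 ξᴴ, spectralSum_mul_comm h0 ηᴴ, ← spectralSum_fromBlocks_gram h0]
  exact spectralSum_add_le_spectralSum_fromBlocks hf (isHermitian_fromBlocks_gram ξ η)
    (spectrum_fromBlocks_gram_subset ξ η)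

theorem spectralSum_add_eq_spectralSum_gram_add_iff (hf : StrictConvexOn ℝ (Set.Ici 0) f)
    (h0 : f 0 = 0) (ξ : Matrix m n 𝕜) (η : Matrix k n 𝕜) :
    spectralSum f (ξᴴ * ξ) + spectralSum f (ηᴴ * η) = spectralSum f (ξᴴ * ξ + ηᴴ * η) ↔
      ξ * ηᴴ = 0 := by
  classical
  rw [spectralSum_mul_comm h0 ξᴴ, spectralSum_mul_comm h0 ηᴴ, ← spectralSum_fromBlocks_gram h0]
  exact spectralSum_add_eq_spectralSum_fromBlocks_iff hf (isHermitian_fromBlocks_gram ξ η)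
    (spectrum_fromBlocks_gram_subset ξ η)

end GramMatrix

section Clarkson

lemma mul_conjTranspose_eq_zero_of_spectralSum_clarkson_eq
    (hf : StrictConvexOn ℝ (Set.Ici 0) f) (h0 : f 0 = 0) {ξ η : Matrix m n 𝕜}
    (h : spectralSum f ((ξ + η)ᴴ * (ξ + η)) + spectralSum f ((ξ - η)ᴴ * (ξ - η)) =
      2 * (spectralSum f (ξᴴ * ξ) + spectralSum f (ηᴴ * η))) : ξ * ηᴴ = 0 := by
  refine (spectralSum_add_eq_spectralSum_gram_add_iff hf h0 ξ η).mp
    (le_antisymm (spectralSum_add_le_spectralSum_gram_add hf.convexOn h0 ξ η) ?_)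
  linarith [two_mul_spectralSum_le_of_parallelogram hf.convexOn ξ η]

theorem spectralSum_clarkson_eq_iff (hf : StrictConvexOn ℝ (Set.Ici 0) f) (h0 : f 0 = 0)
    (ξ η : Matrix m n 𝕜) :
    spectralSum f ((ξ + η)ᴴ * (ξ + η)) + spectralSum f ((ξ - η)ᴴ * (ξ - η)) =
        2 * (spectralSum f (ξᴴ * ξ) + spectralSum f (ηᴴ * η)) ↔
      ξ * ηᴴ = 0 ∧ ξᴴ * η = 0 := by
  classical
  refine ⟨fun h => ⟨mul_conjTranspose_eq_zero_of_spectralSum_clarkson_eq hf h0 h, ?_⟩,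
    fun ⟨hrow, hcol⟩ => ?_⟩
  · simp only [spectralSum_mul_comm h0 (_ᴴ)] at h
    have hadjoint : ξᴴ * ηᴴᴴ = 0 :=
      mul_conjTranspose_eq_zero_of_spectralSum_clarkson_eq hf h0 (by simpa using h)
    simpa using hadjoint
  · have hcol' : ηᴴ * ξ = 0 := by simpa using congrArg conjTranspose hcol
    have hadd : (ξ + η)ᴴ * (ξ + η) = ξᴴ * ξ + ηᴴ * η := by
      simp [Matrix.add_mul, Matrix.mul_add, hcol, hcol']
    have hsub : (ξ - η)ᴴ * (ξ - η) = ξᴴ * ξ + ηᴴ * η := by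
      simp [Matrix.sub_mul, Matrix.mul_sub, hcol, hcol']
    rw [hadd, hsub, (spectralSum_add_eq_spectralSum_gram_add_iff hf h0 ξ η).mpr hrow, two_mul]

lemma spectralSum_rpow_clarkson_eq_iff {q : ℝ} (hq0 : 0 < q) (hq1 : q ≠ 1) (ξ η : Matrix m n 𝕜) :
    spectralSum (· ^ q) ((ξ + η)ᴴ * (ξ + η)) + spectralSum (· ^ q) ((ξ - η)ᴴ * (ξ - η)) =
        2 * (spectralSum (· ^ q) (ξᴴ * ξ) + spectralSum (· ^ q) (ηᴴ * η)) ↔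
      ξ * ηᴴ = 0 ∧ ξᴴ * η = 0 := by
  rcases hq1.lt_or_gt with hlt | hgt
  · have h := spectralSum_clarkson_eq_iff (Real.strictConcaveOn_rpow hq0 hlt).neg
      (by simp [Real.zero_rpow hq0.ne']) ξ η
    simp only [Pi.neg_def, spectralSum_neg] at h
    rw [← h, ← neg_add, ← neg_add, mul_neg, neg_inj]
  · exact spectralSum_clarkson_eq_iff (strictConvexOn_rpow hgt) (Real.zero_rpow hq0.ne') ξ η

theorem schatten_clarkson_equality_iff_general {p : ℝ} (hp0 : 0 < p) (hp2 : p ≠ 2)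
    (ξ η : Matrix m n 𝕜) :
    (cfc (fun t : ℝ => t ^ (p / 2)) ((ξ + η)ᴴ * (ξ + η))).trace +
          (cfc (fun t : ℝ => t ^ (p / 2)) ((ξ - η)ᴴ * (ξ - η))).trace =
        2 * ((cfc (fun t : ℝ => t ^ (p / 2)) (ξᴴ * ξ)).trace +
          (cfc (fun t : ℝ => t ^ (p / 2)) (ηᴴ * η)).trace) ↔
      ξ * ηᴴ = 0 ∧ ξᴴ * η = 0 := by
  simp only [trace_cfc_eq_spectralSum (𝕜 := 𝕜) _ (isHermitian_conjTranspose_mul_self _)]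
  rw [← spectralSum_rpow_clarkson_eq_iff (half_pos hp0) (by grind) ξ η]
  norm_cast

end Clarkson

/-- Equality case of the noncommutative Clarkson inequality in `M_n(ℂ)` with
the Schatten `p`-norm, `0 < p < ∞`, `p ≠ 2`. -/
theorem schatten_clarkson_equality_iff
    {n : ℕ} (p : ℝ) (hp0 : 0 < p) (hp2 : p ≠ 2)
    (ξ η : Matrix (Fin n) (Fin n) ℂ) :
    schattenPowP (ξ + η) p + schattenPowP (ξ - η) p
        = 2 * (schattenPowP ξ p + schattenPowP η p)
      ↔ (ξ * ηᴴ = 0 ∧ ξᴴ * η = 0) :=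
  schatten_clarkson_equality_iff_general hp0 hp2 ξ η
end

section
/- Let T : L^p(μ) → L^p(ν) be a surjective linear isometry between σ-finite L^p spaces, 1 < p < ∞, p ≠ 2, and suppose T maps indicator-supported bands to bands: for each measurable set A there is a measurable set A' with T(1_A · L^p(μ)) = 1_{A'} · L^p(ν). Then A ↦ A' (modulo null sets) is a Boolean isomorphism of the measure algebras: it is bijective, and (A ∪ B)' = A' ∪ B', (A ∩ B)' = A' ∩ B', (A^c)' = (A')^c up to null sets. -/
open MeasureTheory ENNReal

/-- The band of an `L^p` space determined by a set `A`: functions vanishing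
a.e. off `A`. -/
def lpBand {Ω : Type*} [MeasurableSpace Ω] (μ : Measure Ω) (p : ℝ≥0∞)
    (A : Set Ω) : Set (Lp ℂ p μ) :=
  {f | ∀ᵐ ω ∂μ, ω ∉ A → (f : Ω → ℂ) ω = 0}

/-!
The map `A ↦ lpBand μ p A` turns intersections of sets into intersections of bands and unions into
sums, and a band determines its set up to null sets; so `Φ` respects the Boolean operations and is
injective.

The crucial point is that every measurable `B ⊆ Ω₂` is attained. Let `P_A` denote multiplication by
the indicator function of `A`. Then `T P_A = P_{Φ A} T`, so the idempotent `Q = T⁻¹ P_B T` commutes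
with every `P_A`. A continuous operator with this property satisfies `‖Q f‖ ≤ C ‖f‖` almost
everywhere. Applying this to `f - c • g`, with `c` in a countable dense set of scalars, gives
`g • Q f = f • Q g` a.e., so `Q` is multiplication by `Q w / w` for any nowhere vanishing `w ∈ L^p`.
As `Q` is idempotent, this multiplier takes only the values `0` and `1`: thus `Q = P_A` with
`A = {Q w ≠ 0}`, and `Φ A = B`.
-/

open Filter
open scoped Pointwise

section WeakUnit

variable {Ω : Type*} [MeasurableSpace Ω]

theorem exists_pos_memLp (μ : Measure Ω) [SigmaFinite μ] (p : ℝ≥0∞) :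
    ∃ w : Ω → ℝ, (∀ x, 0 < w x) ∧ MemLp w p μ := by
  obtain ⟨g, hg_pos, hg_meas, hg_int⟩ :=
    exists_pos_lintegral_lt_of_sigmaFinite μ (ε := 1) one_ne_zero
  have hg : MemLp (fun x ↦ (g x : ℝ)) 1 μ := by
    refine ⟨hg_meas.coe_nnreal_real.aestronglyMeasurable, ?_⟩
    simpa [eLpNorm_one_eq_lintegral_enorm, enorm_eq_nnnorm] using hg_int.trans one_lt_top
  refine ⟨fun x ↦ ‖(g x : ℝ)‖ ^ p⁻¹.toReal, fun x ↦ ?_, by simpa using hg.norm_rpow_div p⁻¹⟩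
  exact Real.rpow_pos_of_pos (norm_pos_iff.2 (NNReal.coe_pos.2 (hg_pos x)).ne') _

theorem exists_Lp_ae_ne_zero (𝕜 : Type*) [RCLike 𝕜] (μ : Measure Ω) [SigmaFinite μ] (p : ℝ≥0∞) :
    ∃ w : Lp 𝕜 p μ, ∀ᵐ x ∂μ, w x ≠ 0 := by
  obtain ⟨w, hw_pos, hw⟩ := exists_pos_memLp μ p
  refine ⟨(hw.ofReal (K := 𝕜)).toLp _, ?_⟩
  filter_upwards [(hw.ofReal (K := 𝕜)).coeFn_toLp] with x hx
  rw [hx]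
  exact RCLike.ofReal_ne_zero.2 (hw_pos x).ne'

end WeakUnit

section BandProj

variable {Ω : Type*} [MeasurableSpace Ω] {μ : Measure Ω} {p : ℝ≥0∞} [Fact (1 ≤ p)]
  {𝕜 : Type*} [NormedField 𝕜] {E : Type*} [NormedAddCommGroup E] [NormedSpace 𝕜 E] {A B : Set Ω}

variable (𝕜) in
/-- The band projection of `L^p` determined by a measurable set `A`, that is, multiplication by the
indicator function of `A`. -/
noncomputable def bandProj (hA : MeasurableSet A) : Lp E p μ →L[𝕜] Lp E p μ :=
  LinearMap.mkContinuous
    { toFun f := ((Lp.memLp f).indicator hA).toLp _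
      map_add' f g := by
        rw [← MemLp.toLp_add, MemLp.toLp_eq_toLp_iff, ← Set.indicator_add']
        exact (Lp.coeFn_add f g).indicator
      map_smul' c f := by
        rw [RingHom.id_apply, ← MemLp.toLp_const_smul, MemLp.toLp_eq_toLp_iff]
        exact (Lp.coeFn_smul c f).indicator.trans
          (.of_eq (Set.indicator_const_smul A c f)) }
    1 fun f ↦ by
      refine Lp.norm_le_mul_norm_of_ae_le_mul ?_
      filter_upwards [((Lp.memLp f).indicator hA).coeFn_toLp] with x hx
      simpa only [LinearMap.coe_mk, AddHom.coe_mk, hx, one_mul]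
        using norm_indicator_le_norm_self _ x

theorem coeFn_bandProj (hA : MeasurableSet A) (f : Lp E p μ) :
    bandProj 𝕜 hA f =ᵐ[μ] A.indicator f :=
  ((Lp.memLp f).indicator hA).coeFn_toLp

theorem coeFn_bandProj_bandProj (hA : MeasurableSet A) (hB : MeasurableSet B) (f : Lp E p μ) :
    bandProj 𝕜 hA (bandProj 𝕜 hB f) =ᵐ[μ] (A ∩ B).indicator f := by
  refine (coeFn_bandProj hA _).trans ?_
  rw [← Set.indicator_indicator]
  exact (coeFn_bandProj hB f).indicator

theorem bandProj_idem (hA : MeasurableSet A) (f : Lp E p μ) :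
    bandProj 𝕜 hA (bandProj 𝕜 hA f) = bandProj 𝕜 hA f := by
  refine Lp.ext ((coeFn_bandProj_bandProj hA hA f).trans ?_)
  rw [Set.inter_self]
  exact (coeFn_bandProj hA f).symm

theorem bandProj_comm (hA : MeasurableSet A) (hB : MeasurableSet B) (f : Lp E p μ) :
    bandProj 𝕜 hA (bandProj 𝕜 hB f) = bandProj 𝕜 hB (bandProj 𝕜 hA f) := by
  refine Lp.ext ((coeFn_bandProj_bandProj hA hB f).trans ?_)
  rw [Set.inter_comm]
  exact (coeFn_bandProj_bandProj hB hA f).symm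

end BandProj

section BandPreserving

variable {Ω : Type*} [MeasurableSpace Ω] {μ : Measure Ω} {p : ℝ≥0∞} [Fact (1 ≤ p)]
  {𝕜 : Type*} {E F : Type*} [NormedAddCommGroup E] [NormedAddCommGroup F]

/-- A continuous operator between `L^p` spaces over the same measure is band preserving if it
commutes with all band projections (equivalently, does not enlarge supports). -/
def IsBandPreserving [NormedField 𝕜] [NormedSpace 𝕜 E] [NormedSpace 𝕜 F]
    (Q : Lp E p μ →L[𝕜] Lp F p μ) : Prop :=
  ∀ ⦃A : Set Ω⦄ (hA : MeasurableSet A) (f : Lp E p μ),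
    Q (bandProj 𝕜 hA f) = bandProj 𝕜 hA (Q f)

theorem IsBandPreserving.exists_ae_norm_apply_le [NontriviallyNormedField 𝕜] [NormedSpace 𝕜 E]
    [NormedSpace 𝕜 F] {Q : Lp E p μ →L[𝕜] Lp F p μ} (hQ : IsBandPreserving Q) :
    ∃ C, ∀ f : Lp E p μ, ∀ᵐ x ∂μ, ‖Q f x‖ ≤ C * ‖f x‖ := by
  -- On `A = {C ‖f‖ < ‖Q f‖}` the norms satisfy `C ‖P_A f‖ ≤ ‖Q (P_A f)‖`. Any `C > ‖Q‖` thus forces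
  -- `P_A f = 0`, whatever the exponent.
  refine ⟨‖Q‖ + 1, fun f ↦ ?_⟩
  set A : Set Ω := {x | (‖Q‖ + 1) * ‖f x‖ < ‖Q f x‖}
  have hA : MeasurableSet A := measurableSet_lt
    ((Lp.stronglyMeasurable f).norm.measurable.const_mul _)
    (Lp.stronglyMeasurable (Q f)).norm.measurable
  have h_lower : ‖bandProj 𝕜 hA f‖ ≤ (‖Q‖ + 1)⁻¹ * ‖Q (bandProj 𝕜 hA f)‖ := by
    apply Lp.norm_le_mul_norm_of_ae_le_mul
    rw [hQ]
    filter_upwards [coeFn_bandProj (𝕜 := 𝕜) hA f, coeFn_bandProj (𝕜 := 𝕜) hA (Q f)] with x hf hQf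
    rw [hf, hQf, le_inv_mul_iff₀ (by positivity)]
    by_cases hx : x ∈ A
    · simpa only [Set.indicator_of_mem hx] using hx.le
    · simp only [Set.indicator_of_notMem hx, norm_zero, mul_zero, le_refl]
  have h_zero : bandProj 𝕜 hA f = 0 := by
    rw [le_inv_mul_iff₀ (by positivity)] at h_lower
    rw [← norm_le_zero_iff]
    linarith [Q.le_opNorm (bandProj 𝕜 hA f)]
  have hQ_zero : bandProj 𝕜 hA (Q f) = 0 := by rw [← hQ, h_zero, map_zero]
  filter_upwards [coeFn_bandProj (𝕜 := 𝕜) hA (Q f), Lp.coeFn_zero F p μ] with x hx hx0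
  by_contra! hxA
  rw [hQ_zero, hx0, Set.indicator_of_mem (show x ∈ A from hxA), Pi.zero_apply] at hx
  rw [← hx, norm_zero] at hxA
  exact hxA.not_ge (by positivity)

theorem smul_eq_smul_of_norm_sub_smul_le [NormedField 𝕜] [NormedSpace 𝕜 F] {ι : Type*}
    {c : ι → 𝕜} (hc : DenseRange c) {C : ℝ} {u v : 𝕜} {a b : F} (hb : ‖b‖ ≤ C * ‖v‖)
    (h : ∀ i, ‖a - c i • b‖ ≤ C * ‖u - c i * v‖) : v • a = u • b := by
  have h_all : ∀ t : 𝕜, ‖a - t • b‖ ≤ C * ‖u - t * v‖ := fun t ↦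
    hc.induction_on t (isClosed_le (by fun_prop) (by fun_prop)) h
  rcases eq_or_ne v 0 with rfl | hv
  · have hb_zero : b = 0 := by simpa using hb
    simp only [hb_zero, zero_smul, smul_zero]
  · have ha : a = (u / v) • b := by simpa [hv, sub_eq_zero] using h_all (u / v)
    rw [ha, smul_smul, mul_div_cancel₀ _ hv]

theorem IsBandPreserving.ae_smul_apply_eq [NontriviallyNormedField 𝕜]
    [TopologicalSpace.SeparableSpace 𝕜] [NormedSpace 𝕜 F] {Q : Lp 𝕜 p μ →L[𝕜] Lp F p μ}
    (hQ : IsBandPreserving Q) (f g : Lp 𝕜 p μ) :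
    ∀ᵐ x ∂μ, g x • Q f x = f x • Q g x := by
  obtain ⟨C, hC⟩ := hQ.exists_ae_norm_apply_le
  let c := TopologicalSpace.denseSeq 𝕜
  have h_sub : ∀ᵐ x ∂μ, ∀ n, ‖Q f x - c n • Q g x‖ ≤ C * ‖f x - c n * g x‖ := by
    refine ae_all_iff.2 fun n ↦ ?_
    have hC_n := hC (f - c n • g)
    rw [map_sub, map_smul] at hC_n
    filter_upwards [hC_n, Lp.coeFn_sub f (c n • g), Lp.coeFn_smul (c n) g,
      Lp.coeFn_sub (Q f) (c n • Q g), Lp.coeFn_smul (c n) (Q g)] with x hx hsub hsmul hQsub hQsmul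
    simpa only [hsub, hsmul, hQsub, hQsmul, Pi.sub_apply, Pi.smul_apply, smul_eq_mul] using hx
  filter_upwards [hC g, h_sub] with x hg hx
  exact smul_eq_smul_of_norm_sub_smul_le (TopologicalSpace.denseRange_denseSeq 𝕜) hg hx

theorem IsBandPreserving.exists_eq_bandProj [RCLike 𝕜] [SigmaFinite μ]
    {Q : Lp 𝕜 p μ →L[𝕜] Lp 𝕜 p μ} (hQ : IsBandPreserving Q) (hQ_idem : ∀ f, Q (Q f) = Q f) :
    ∃ (A : Set Ω) (hA : MeasurableSet A), Q = bandProj 𝕜 hA := by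
  obtain ⟨w, hw⟩ := exists_Lp_ae_ne_zero 𝕜 μ p
  have hA : MeasurableSet {x | Q w x ≠ 0} :=
    (Lp.stronglyMeasurable (Q w)).measurable (measurableSet_singleton (0 : 𝕜)).compl
  refine ⟨_, hA, ContinuousLinearMap.ext fun f ↦ Lp.ext ?_⟩
  have h_idem := hQ.ae_smul_apply_eq (Q w) w
  rw [hQ_idem] at h_idem
  filter_upwards [hw, h_idem, hQ.ae_smul_apply_eq f w, coeFn_bandProj (𝕜 := 𝕜) hA f]
    with x hwx hQQ hQf hP
  rw [hP, Set.indicator_apply]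
  split_ifs with hx
  · have hQw : w x = Q w x := mul_right_cancel₀ hx hQQ
    rw [← hQw, smul_eq_mul, smul_eq_mul, mul_comm (f x)] at hQf
    exact mul_left_cancel₀ hwx hQf
  · have hQw : Q w x = 0 := not_not.1 hx
    rw [hQw, smul_zero] at hQf
    exact (smul_eq_zero.1 hQf).resolve_left hwx

end BandPreserving

section LpBand

variable {Ω : Type*} [MeasurableSpace Ω] {μ : Measure Ω} {p : ℝ≥0∞} {A B : Set Ω}

theorem lpBand_mono (h : A ≤ᵐ[μ] B) : lpBand μ p A ⊆ lpBand μ p B := by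
  intro f hf
  filter_upwards [hf, h] with x hfx hAB hxB
  exact hfx fun hxA ↦ hxB (hAB hxA)

theorem lpBand_congr (h : A =ᵐ[μ] B) : lpBand μ p A = lpBand μ p B :=
  (lpBand_mono h.le).antisymm (lpBand_mono h.symm.le)

theorem lpBand_empty : lpBand μ p ∅ = {0} := by
  ext f
  rw [Set.mem_singleton_iff, Lp.eq_zero_iff_ae_eq_zero]
  simp [lpBand, EventuallyEq]

theorem lpBand_univ : lpBand μ p Set.univ = Set.univ := by
  simp [lpBand]

theorem lpBand_inter : lpBand μ p (A ∩ B) = lpBand μ p A ∩ lpBand μ p B := by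
  ext f
  simp only [lpBand, Set.mem_inter_iff, Set.mem_ofPred_eq, ← eventually_and]
  exact eventually_congr (.of_forall fun x ↦ by tauto)

theorem lpBand_subset_iff_ae_le [SigmaFinite μ] (hA : MeasurableSet A) :
    lpBand μ p A ⊆ lpBand μ p B ↔ A ≤ᵐ[μ] B := by
  refine ⟨fun h ↦ ?_, lpBand_mono⟩
  obtain ⟨w, hw⟩ := exists_Lp_ae_ne_zero ℂ μ p
  have hwA := (Lp.memLp w).indicator hA
  have h_mem : hwA.toLp _ ∈ lpBand μ p A := by
    filter_upwards [hwA.coeFn_toLp] with x hx hxA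
    rw [hx, Set.indicator_of_notMem hxA]
  filter_upwards [h h_mem, hwA.coeFn_toLp, hw] with x hxB hx hwx hxA
  by_contra hxB'
  exact hwx (by rw [← Set.indicator_of_mem hxA w, ← hx, hxB hxB'])

theorem lpBand_eq_iff_ae_eq [SigmaFinite μ] (hA : MeasurableSet A) (hB : MeasurableSet B) :
    lpBand μ p A = lpBand μ p B ↔ A =ᵐ[μ] B :=
  ⟨fun h ↦ ((lpBand_subset_iff_ae_le hA).1 h.le).antisymm ((lpBand_subset_iff_ae_le hB).1 h.ge),
    lpBand_congr⟩

variable [Fact (1 ≤ p)] {f g : Lp ℂ p μ}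

theorem bandProj_mem_lpBand (hA : MeasurableSet A) : bandProj ℂ hA f ∈ lpBand μ p A := by
  filter_upwards [coeFn_bandProj (𝕜 := ℂ) hA f] with x hx hxA
  rw [hx, Set.indicator_of_notMem hxA]

theorem sub_bandProj_mem_lpBand (hA : MeasurableSet A) (hf : f ∈ lpBand μ p (A ∪ B)) :
    f - bandProj ℂ hA f ∈ lpBand μ p B := by
  filter_upwards [hf, coeFn_bandProj (𝕜 := ℂ) hA f, Lp.coeFn_sub f (bandProj ℂ hA f)]
    with x hfx hP hsub hxB
  rw [hsub, Pi.sub_apply, hP]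
  by_cases hxA : x ∈ A
  · rw [Set.indicator_of_mem hxA, sub_self]
  · rw [Set.indicator_of_notMem hxA, sub_zero, hfx (by simp [hxA, hxB])]

theorem bandProj_eq_of_mem_lpBand (hA : MeasurableSet A) (hg : g ∈ lpBand μ p A)
    (hfg : f - g ∈ lpBand μ p Aᶜ) : bandProj ℂ hA f = g := by
  apply Lp.ext
  filter_upwards [coeFn_bandProj (𝕜 := ℂ) hA f, hg, hfg, Lp.coeFn_sub f g] with x hP hgx hfgx hsub
  rw [hP]
  by_cases hxA : x ∈ A
  · rw [Set.indicator_of_mem hxA, ← sub_eq_zero, ← Pi.sub_apply, ← hsub, hfgx (not_not.2 hxA)]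
  · rw [Set.indicator_of_notMem hxA, hgx hxA]

theorem mem_lpBand_iff_bandProj_eq (hA : MeasurableSet A) :
    f ∈ lpBand μ p A ↔ bandProj ℂ hA f = f := by
  refine ⟨fun hf ↦ bandProj_eq_of_mem_lpBand hA hf ?_, fun h ↦ h ▸ bandProj_mem_lpBand hA⟩
  filter_upwards [Lp.coeFn_zero ℂ p μ] with x hx _
  rw [sub_self, hx, Pi.zero_apply]

theorem lpBand_union (hA : MeasurableSet A) :
    lpBand μ p (A ∪ B) = lpBand μ p A + lpBand μ p B := by
  refine Set.Subset.antisymm (fun f hf ↦ ?_) ?_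
  · exact Set.mem_add.2 ⟨bandProj ℂ hA f, bandProj_mem_lpBand hA, f - bandProj ℂ hA f,
      sub_bandProj_mem_lpBand hA hf, add_sub_cancel _ _⟩
  · rintro _ ⟨f, hf, g, hg, rfl⟩
    filter_upwards [hf, hg, Lp.coeFn_add f g] with x hfx hgx hadd hx
    rw [Set.mem_union, not_or] at hx
    rw [hadd, Pi.add_apply, hfx hx.1, hgx hx.2, add_zero]

end LpBand

section BandMap

variable {Ω₁ Ω₂ : Type*} [MeasurableSpace Ω₁] [MeasurableSpace Ω₂] {μ : Measure Ω₁} {ν : Measure Ω₂}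
  {p : ℝ≥0∞}

/-- `T` maps bands to bands, and `Φ` is the induced map on sets: `T` carries the band of `A` onto
the band of `Φ A`. Outside the measurable sets `Φ` is arbitrary. -/
structure IsBandMap (T : Lp ℂ p μ → Lp ℂ p ν) (Φ : Set Ω₁ → Set Ω₂) : Prop where
  measurableSet {A : Set Ω₁} : MeasurableSet A → MeasurableSet (Φ A)
  image_lpBand {A : Set Ω₁} : MeasurableSet A → T '' lpBand μ p A = lpBand ν p (Φ A)

namespace IsBandMap

section Additive

variable {𝓕 : Type*} [EquivLike 𝓕 (Lp ℂ p μ) (Lp ℂ p ν)] {T : 𝓕} {Φ : Set Ω₁ → Set Ω₂}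
  {A B : Set Ω₁}

theorem apply_mem_lpBand (h : IsBandMap T Φ) (hA : MeasurableSet A) {f : Lp ℂ p μ}
    (hf : f ∈ lpBand μ p A) : T f ∈ lpBand ν p (Φ A) :=
  h.image_lpBand hA ▸ Set.mem_image_of_mem T hf

theorem ae_eq_of_ae_eq [SigmaFinite μ] (h : IsBandMap T Φ) (hA : MeasurableSet A)
    (hB : MeasurableSet B) (hAB : Φ A =ᵐ[ν] Φ B) : A =ᵐ[μ] B := by
  rw [← lpBand_eq_iff_ae_eq (p := p) hA hB, ← (EquivLike.injective T).image_injective.eq_iff,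
    h.image_lpBand hA, h.image_lpBand hB, lpBand_congr hAB]

variable [SigmaFinite ν]

theorem ae_eq_of_image_eq (h : IsBandMap T Φ) (hA : MeasurableSet A) {B : Set Ω₂}
    (hB : MeasurableSet B) (hAB : T '' lpBand μ p A = lpBand ν p B) : Φ A =ᵐ[ν] B := by
  rwa [← lpBand_eq_iff_ae_eq (p := p) (h.measurableSet hA) hB, ← h.image_lpBand hA]

theorem inter_ae_eq (h : IsBandMap T Φ) (hA : MeasurableSet A) (hB : MeasurableSet B) :
    Φ (A ∩ B) =ᵐ[ν] (Φ A ∩ Φ B : Set Ω₂) := by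
  refine h.ae_eq_of_image_eq (hA.inter hB) ((h.measurableSet hA).inter (h.measurableSet hB)) ?_
  rw [lpBand_inter, Set.image_inter (EquivLike.injective T), h.image_lpBand hA, h.image_lpBand hB,
    lpBand_inter]

theorem univ_ae_eq (h : IsBandMap T Φ) : Φ Set.univ =ᵐ[ν] (Set.univ : Set Ω₂) := by
  refine h.ae_eq_of_image_eq .univ .univ ?_
  rw [lpBand_univ, lpBand_univ, Set.image_univ, (EquivLike.surjective T).range_eq]

variable [AddEquivClass 𝓕 (Lp ℂ p μ) (Lp ℂ p ν)]

theorem empty_ae_eq (h : IsBandMap T Φ) : Φ ∅ =ᵐ[ν] (∅ : Set Ω₂) := by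
  refine h.ae_eq_of_image_eq .empty .empty ?_
  rw [lpBand_empty, lpBand_empty, Set.image_singleton, map_zero]

variable [Fact (1 ≤ p)]

theorem union_ae_eq (h : IsBandMap T Φ) (hA : MeasurableSet A) (hB : MeasurableSet B) :
    Φ (A ∪ B) =ᵐ[ν] (Φ A ∪ Φ B : Set Ω₂) := by
  refine h.ae_eq_of_image_eq (hA.union hB) ((h.measurableSet hA).union (h.measurableSet hB)) ?_
  rw [lpBand_union hA, Set.image_add, h.image_lpBand hA, h.image_lpBand hB,
    lpBand_union (h.measurableSet hA)]

theorem compl_ae_eq (h : IsBandMap T Φ) (hA : MeasurableSet A) :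
    Φ Aᶜ =ᵐ[ν] ((Φ A)ᶜ : Set Ω₂) := by
  have h_inter := h.inter_ae_eq hA hA.compl
  have h_union := h.union_ae_eq hA hA.compl
  rw [Set.inter_compl_self] at h_inter
  rw [Set.union_compl_self] at h_union
  refine eventuallyEq_set.2 ?_
  filter_upwards [(h_inter.symm.trans h.empty_ae_eq).mem_iff,
    (h_union.symm.trans h.univ_ae_eq).mem_iff] with x h_disjoint h_cover
  simp only [Set.mem_inter_iff, Set.mem_empty_iff_false, iff_false] at h_disjoint
  simp only [Set.mem_union, Set.mem_univ, iff_true] at h_cover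
  rw [Set.mem_compl_iff]
  tauto

theorem map_bandProj (h : IsBandMap T Φ) (hA : MeasurableSet A) (f : Lp ℂ p μ) :
    T (bandProj ℂ hA f) = bandProj ℂ (h.measurableSet hA) (T f) := by
  refine (bandProj_eq_of_mem_lpBand _ (h.apply_mem_lpBand hA (bandProj_mem_lpBand hA)) ?_).symm
  rw [← map_sub, ← lpBand_congr (h.compl_ae_eq hA)]
  refine h.apply_mem_lpBand hA.compl (sub_bandProj_mem_lpBand hA ?_)
  rw [Set.union_compl_self, lpBand_univ]
  exact Set.mem_univ f

end Additive

theorem exists_ae_eq [SigmaFinite μ] [SigmaFinite ν] [Fact (1 ≤ p)] {T : Lp ℂ p μ ≃L[ℂ] Lp ℂ p ν}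
    {Φ : Set Ω₁ → Set Ω₂} (h : IsBandMap T Φ) {B : Set Ω₂} (hB : MeasurableSet B) :
    ∃ A, MeasurableSet A ∧ Φ A =ᵐ[ν] B := by
  let Q : Lp ℂ p μ →L[ℂ] Lp ℂ p μ :=
    (T.symm : Lp ℂ p ν →L[ℂ] Lp ℂ p μ) ∘L bandProj ℂ hB ∘L (T : Lp ℂ p μ →L[ℂ] Lp ℂ p ν)
  have hTQ (f : Lp ℂ p μ) : T (Q f) = bandProj ℂ hB (T f) := T.apply_symm_apply _
  have hQ_idem (f : Lp ℂ p μ) : Q (Q f) = Q f := T.injective (by rw [hTQ, hTQ, bandProj_idem])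
  have hQ : IsBandPreserving Q := fun A hA f ↦ T.injective <| by
    rw [hTQ, h.map_bandProj, h.map_bandProj, hTQ, bandProj_comm]
  obtain ⟨A, hA, hQA⟩ := hQ.exists_eq_bandProj hQ_idem
  have h_proj (g : Lp ℂ p ν) : bandProj ℂ (h.measurableSet hA) g = bandProj ℂ hB g := by
    rw [← T.apply_symm_apply g, ← h.map_bandProj hA, ← hTQ, hQA]
  refine ⟨A, hA, (lpBand_eq_iff_ae_eq (p := p) (h.measurableSet hA) hB).1 (Set.ext fun g ↦ ?_)⟩
  rw [mem_lpBand_iff_bandProj_eq (h.measurableSet hA), mem_lpBand_iff_bandProj_eq hB, h_proj]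

end IsBandMap

end BandMap

theorem band_map_is_boolean_isomorphism_general
    {Ω₁ Ω₂ : Type*} [MeasurableSpace Ω₁] [MeasurableSpace Ω₂]
    (μ : Measure Ω₁) (ν : Measure Ω₂) [SigmaFinite μ] [SigmaFinite ν]
    (p : ℝ≥0∞) [Fact (1 ≤ p)] (T : Lp ℂ p μ ≃L[ℂ] Lp ℂ p ν)
    (Φ : Set Ω₁ → Set Ω₂)
    (hΦmeas : ∀ A : Set Ω₁, MeasurableSet A → MeasurableSet (Φ A))
    (hΦ : ∀ A : Set Ω₁, MeasurableSet A →
      T '' lpBand μ p A = lpBand ν p (Φ A)) :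
    (∀ A B : Set Ω₁, MeasurableSet A → MeasurableSet B →
        Φ (A ∪ B) =ᵐ[ν] (Φ A ∪ Φ B : Set Ω₂)) ∧
    (∀ A B : Set Ω₁, MeasurableSet A → MeasurableSet B →
        Φ (A ∩ B) =ᵐ[ν] (Φ A ∩ Φ B : Set Ω₂)) ∧
    (∀ A : Set Ω₁, MeasurableSet A → Φ Aᶜ =ᵐ[ν] ((Φ A)ᶜ : Set Ω₂)) ∧
    (∀ A B : Set Ω₁, MeasurableSet A → MeasurableSet B →
        Φ A =ᵐ[ν] Φ B → A =ᵐ[μ] B) ∧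
    (∀ B : Set Ω₂, MeasurableSet B → ∃ A : Set Ω₁, MeasurableSet A ∧
        Φ A =ᵐ[ν] B) := by
  have h : IsBandMap T Φ := ⟨hΦmeas _, hΦ _⟩
  exact ⟨fun _ _ ↦ h.union_ae_eq, fun _ _ ↦ h.inter_ae_eq, fun _ ↦ h.compl_ae_eq,
    fun _ _ ↦ h.ae_eq_of_ae_eq, fun _ ↦ h.exists_ae_eq⟩

/-- If a surjective linear isometry of σ-finite `L^p` spaces, `1 < p < ∞`,
`p ≠ 2`, maps bands to bands via `A ↦ Φ A`, then `Φ` induces a Boolean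
isomorphism of the measure algebras. -/
theorem band_map_is_boolean_isomorphism
    {Ω₁ Ω₂ : Type*} [MeasurableSpace Ω₁] [MeasurableSpace Ω₂]
    (μ : Measure Ω₁) (ν : Measure Ω₂) [SigmaFinite μ] [SigmaFinite ν]
    (p : ℝ≥0∞) [Fact (1 ≤ p)] (hp_top : p ≠ ∞) (hp1 : 1 < p.toReal)
    (hp2 : p.toReal ≠ 2)
    (T : Lp ℂ p μ ≃ₗᵢ[ℂ] Lp ℂ p ν)
    (Φ : Set Ω₁ → Set Ω₂)
    (hΦmeas : ∀ A : Set Ω₁, MeasurableSet A → MeasurableSet (Φ A))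
    (hΦ : ∀ A : Set Ω₁, MeasurableSet A →
      T '' lpBand μ p A = lpBand ν p (Φ A)) :
    (∀ A B : Set Ω₁, MeasurableSet A → MeasurableSet B →
        Φ (A ∪ B) =ᵐ[ν] (Φ A ∪ Φ B : Set Ω₂)) ∧
    (∀ A B : Set Ω₁, MeasurableSet A → MeasurableSet B →
        Φ (A ∩ B) =ᵐ[ν] (Φ A ∩ Φ B : Set Ω₂)) ∧
    (∀ A : Set Ω₁, MeasurableSet A → Φ Aᶜ =ᵐ[ν] ((Φ A)ᶜ : Set Ω₂)) ∧
    (∀ A B : Set Ω₁, MeasurableSet A → MeasurableSet B →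
        Φ A =ᵐ[ν] Φ B → A =ᵐ[μ] B) ∧
    (∀ B : Set Ω₂, MeasurableSet B → ∃ A : Set Ω₁, MeasurableSet A ∧
        Φ A =ᵐ[ν] B) :=
  band_map_is_boolean_isomorphism_general μ ν p T.toContinuousLinearEquiv Φ hΦmeas hΦ
end
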